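/- The sum of the reciprocals of the cyclic numbers diverges: if c_1 < c_2 < c_3 < ... is the increasing enumeration of the cyclic numbers, then the partial sums of 1/c_j tend to infinity as n → ∞. -/

import Mathlib

open Filter Asymptotics Real

/-- A positive integer `n` is *cyclic* if `gcd(n, φ(n)) = 1`. -/
def IsCyclicNum (n : ℕ) : Prop := 0 < n ∧ Nat.gcd n (Nat.totient n) = 1

instance : DecidablePred IsCyclicNum := fun n =>
  decidable_of_iff (0 < n ∧ Nat.gcd n (Nat.totient n) = 1) Iff.rfl

/-- The `n`-th cyclic number, indexed from 1: `cyclicNum 1 = 1`, `cyclicNum 2 = 2`, .... -/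
noncomputable def cyclicNum (n : ℕ) : ℕ := Nat.nth IsCyclicNum (n - 1)

/-- The number of cyclic numbers less than or equal to the real number `x`. -/
noncomputable def cyclicCount (x : ℝ) : ℕ :=
  ((Finset.range (⌊x⌋₊ + 1)).filter IsCyclicNum).card

/-!
Every prime is cyclic, since `φ p = p - 1` is coprime to `p`, and the reciprocals of the primes
already have a divergent sum. The map sending a prime `p` to the number of cyclic numbers below `p`,
which is the index of `p` in the enumeration, exhibits that sum as a subseries.
-/

theorem sum_Icc_one_eq_sum_range {M : Type*} [AddCommMonoid M] (f : ℕ → M) (n : ℕ) :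
    ∑ j ∈ Finset.Icc 1 n, f j = ∑ i ∈ Finset.range n, f (i + 1) := by
  rw [Finset.range_eq_Ico, Finset.sum_Ico_add' f, zero_add, Finset.Ico_add_one_right_eq_Icc]

section Nth

variable {P : ℕ → Prop}

theorem summable_subtype_of_summable_nth {α : Type*} [AddCommGroup α] [UniformSpace α]
    [IsUniformAddGroup α] [CompleteSpace α] {Q : ℕ → Prop} {f : ℕ → α} (hQP : ∀ n, Q n → P n)
    (hf : Summable fun n => f (Nat.nth P n)) : Summable fun n : {n // Q n} => f n := by
  classical
  have count_injective : Function.Injective fun n : {n // Q n} => Nat.count P n := fun m n h =>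
    Subtype.ext (Nat.count_injective (hQP m m.2) (hQP n n.2) h)
  refine (hf.comp_injective count_injective).congr fun n => ?_
  rw [Function.comp_apply, Nat.nth_count (hQP n n.2)]

theorem not_summable_one_div_nth_of_prime_imp (hP : ∀ p, p.Prime → P p) :
    ¬ Summable fun n => (1 : ℝ) / (Nat.nth P n : ℝ) := fun h =>
  Nat.Primes.not_summable_one_div
    (summable_subtype_of_summable_nth (f := fun n => (1 : ℝ) / (n : ℝ)) hP h)

end Nth

theorem isCyclicNum_of_prime {p : ℕ} (hp : p.Prime) : IsCyclicNum p := by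
  refine ⟨hp.pos, ?_⟩
  rw [Nat.totient_prime hp]
  exact (Nat.coprime_self_sub_right hp.one_le).2 p.coprime_one_right

theorem cyclicNum_add_one (n : ℕ) : cyclicNum (n + 1) = Nat.nth IsCyclicNum n := rfl

theorem sum_one_div_cyclicNum_tendsto_atTop :
    Tendsto (fun n : ℕ => ∑ j ∈ Finset.Icc 1 n, (1 : ℝ) / (cyclicNum j : ℝ)) atTop atTop := by
  simp_rw [sum_Icc_one_eq_sum_range, cyclicNum_add_one]
  rw [← not_summable_iff_tendsto_nat_atTop_of_nonneg fun n => by positivity]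
  exact not_summable_one_div_nth_of_prime_imp fun _ => isCyclicNum_of_prime
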